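/- Let n > 2k > 0 and let F ⊆ C([n],k) be an intersecting family. If γ(F) ≥ C(n-u-1, n-k-1) for some real number u with 3 ≤ u ≤ k, then |F| ≤ C(n-1,k-1) + C(n-u-1,n-k-1) - C(n-u-1,k-1). -/

import Mathlib

open Finset

/-- The degree of an element `i` in a family `F`. -/
def deg (F : Finset (Finset ℕ)) (i : ℕ) : ℕ := (F.filter (fun S => i ∈ S)).card

/-- The maximal degree `Δ(F)` of a family `F ⊆ 2^[n]`. -/
def maxDeg (n : ℕ) (F : Finset (Finset ℕ)) : ℕ := (Finset.Icc 1 n).sup (deg F)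

/-- The diversity `γ(F) = |F| - Δ(F)`. -/
def diversity (n : ℕ) (F : Finset (Finset ℕ)) : ℕ := F.card - maxDeg n F

/-!
Fix `i ∈ [n]`. The members of `F` containing `i`, with `i` removed, and those avoiding `i` are
cross-intersecting, so no set of the former lies in the complement of a set of the latter.
Kruskal–Katona turns this into a bound on `|F|` in terms of the number of members avoiding `i`.
When that number lies between `C(N, c)` and `C(N + 1, c)` with `c = n - k - 1`, comparing with an
initial segment of the colex order and using the local LYM inequality interpolates linearly between
the bounds at the end points, so only integers `N` have to be examined. This settles the case where
at most `C(n-3, n-k-1)` members avoid some `i`.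

Otherwise compress `j` to `i` for `i < j`. If at least `C(n-4, n-k-1)` members avoid both `i` and
`j`, then every element is still avoided by at least that many members; if fewer do, applying the
cross-intersecting bounds to the parts of `F` with given trace on `{i, j}` is already enough.
A family that all compressions leave unchanged is split according to its largest element, and
induction on `n` combines the bounds for `(n-1, k)` and `(n-1, k-1)` by Pascal's rule.
-/

open scoped FinsetFamily

section Binomial

lemma monotoneOn_choose (N : ℕ) : MonotoneOn N.choose (Set.Iic (N / 2)) :=
  monotoneOn_of_le_succ Set.ordConnected_Iic fun _ _ _ hr ↦
    Nat.choose_le_succ_of_lt_half_left (Nat.lt_of_succ_le hr)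

lemma choose_le_choose_of_add_le {N p q : ℕ} (hpq : p ≤ q) (hN : N ≤ p + q) :
    N.choose q ≤ N.choose p := by
  rcases lt_or_ge N q with hq | hq
  · simp only [Nat.choose_eq_zero_of_lt hq, zero_le]
  have mono := monotoneOn_choose N
  simp only [MonotoneOn, Set.mem_Iic] at mono
  rw [← Nat.choose_symm hq]
  rcases le_or_gt p (N / 2) with hp | hp
  · exact mono (by omega) hp (by omega)
  · rw [← Nat.choose_symm (hpq.trans hq)]
    exact mono (by omega) (by omega) (by omega)

lemma antitoneOn_choose_sub_choose {a c : ℕ} (ha : 1 ≤ a) (hac : a ≤ c) :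
    AntitoneOn (fun N : ℕ ↦ (N.choose c : ℤ) - N.choose a) (Set.Iio (a + c)) := by
  refine antitoneOn_of_succ_le Set.ordConnected_Iio fun N _ _ hN ↦ ?_
  rw [Nat.succ_eq_succ, Set.mem_Iio] at hN
  have := choose_le_choose_of_add_le (N := N) (Nat.sub_le_sub_right hac 1) (by omega)
  have hc := Nat.choose_eq_choose_pred_add N.succ_pos (by omega : 0 < c)
  have ha := Nat.choose_eq_choose_pred_add N.succ_pos ha
  simp only [Nat.succ_eq_succ, Nat.succ_eq_add_one, Nat.add_sub_cancel] at *
  omega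

lemma choose_sub_choose_eq {n r N : ℕ} (hr : 2 ≤ r) (hrn : r ≤ n) (hN : N ∈ Icc (n - 2) (n - 1)) :
    (N.choose (n - r) : ℤ) - N.choose r = 2 * (n - 1).choose (r - 1) - n.choose r := by
  obtain ⟨r, rfl⟩ := Nat.exists_eq_add_of_le' hr
  obtain ⟨n, rfl⟩ := Nat.exists_eq_add_of_le' (hr.trans hrn)
  have pascal : (n + 2).choose (r + 2) = (n + 1).choose (r + 1) + (n + 1).choose (r + 2) :=
    Nat.choose_succ_succ' _ _
  have pascal₁ : (n + 1).choose (r + 1) = n.choose r + n.choose (r + 1) :=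
    Nat.choose_succ_succ' _ _
  have pascal₂ : (n + 1).choose (r + 2) = n.choose (r + 1) + n.choose (r + 2) :=
    Nat.choose_succ_succ' _ _
  have hsymm : n.choose (n - r) = n.choose r := Nat.choose_symm (by omega)
  have hsymm₁ : (n + 1).choose (n - r) = (n + 1).choose (r + 1) :=
    Nat.choose_symm_of_eq_add (by omega)
  simp only [Nat.add_sub_cancel, show n + 2 - 1 = n + 1 by omega, show r + 2 - 1 = r + 1 by omega,
    show n + 2 - (r + 2) = n - r by omega] at hN ⊢
  obtain ⟨h₁, h₂⟩ := mem_Icc.1 hN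
  obtain rfl | rfl : N = n ∨ N = n + 1 := by omega
  all_goals omega

/-- The size of Frankl's family `{S : 1 ∈ S, S ∩ [2, u + 1] ≠ ∅} ∪ {S : 1 ∉ S, [2, u + 1] ⊆ S}` of
`k`-subsets of `[n]`. -/
def franklCard (n k u : ℕ) : ℤ :=
  (n - 1).choose (k - 1) + (n - u - 1).choose (n - k - 1) - (n - u - 1).choose (k - 1)

lemma franklCard_le_franklCard {n k u v : ℕ} (hu : 2 ≤ u) (huv : u ≤ v) (hk : 2 ≤ k)
    (hkn : 2 * k ≤ n) : franklCard n k u ≤ franklCard n k v := by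
  have hanti := antitoneOn_choose_sub_choose (a := k - 1) (c := n - k - 1) (by omega) (by omega)
  have : ((n - u - 1).choose (n - k - 1) : ℤ) - (n - u - 1).choose (k - 1) ≤
      (n - v - 1).choose (n - k - 1) - (n - v - 1).choose (k - 1) :=
    hanti (Set.mem_Iio.2 (by omega)) (Set.mem_Iio.2 (by omega)) (by omega)
  simp only [franklCard]
  linarith

lemma franklCard_two {n k : ℕ} (hk : 2 ≤ k) (hkn : k < n) :
    franklCard n k 2 = (n - 2).choose (k - 2) + 2 * (n - 3).choose (k - 2) := by
  obtain ⟨k, rfl⟩ := Nat.exists_eq_add_of_le' hk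
  obtain ⟨n, rfl⟩ := Nat.exists_eq_add_of_le' (show 3 ≤ n by omega)
  have hsymm : n.choose (n - k) = n.choose k := Nat.choose_symm (by omega)
  have h₂ := Nat.choose_succ_succ' (n + 1) k
  have h₃ := Nat.choose_succ_succ' n k
  simp only [franklCard, show n + 3 - (k + 2) - 1 = n - k by omega, Nat.add_sub_cancel,
    show n + 3 - 1 = n + 1 + 1 by omega,
    show n + 3 - 2 = n + 1 by omega, show k + 2 - 1 = k + 1 by omega] at *
  omega

lemma franklCard_three {n k : ℕ} (hk : 3 ≤ k) (hkn : k + 1 < n) :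
    franklCard n k 3 = franklCard n k 2 := by
  obtain ⟨k, rfl⟩ := Nat.exists_eq_add_of_le' hk
  obtain ⟨n, rfl⟩ := Nat.exists_eq_add_of_le' (show 4 ≤ n by omega)
  have hsymm : (n + 1).choose (n - k) = (n + 1).choose (k + 1) :=
    Nat.choose_symm_of_eq_add (by omega)
  have hsymm' : n.choose (n - k) = n.choose k := Nat.choose_symm (by omega)
  have h := Nat.choose_succ_succ' n k
  have h' := Nat.choose_succ_succ' n (k + 1)
  simp only [franklCard, show n + 4 - (k + 3) - 1 = n - k by omega,
    show n + 4 - 2 - 1 = n + 1 by omega, show n + 4 - 3 - 1 = n by omega,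
    show k + 3 - 1 = k + 1 + 1 by omega] at *
  omega

lemma franklCard_succ {n k u : ℕ} (hk : 2 ≤ k) (hkn : k < n) (hu : u + 1 < n) :
    franklCard (n + 1) k u = franklCard n k u + franklCard n (k - 1) u := by
  have h₁ := Nat.choose_eq_choose_pred_add (n := n) (k := k - 1) (by omega) (by omega)
  have h₂ := Nat.choose_eq_choose_pred_add (n := n - u) (k := n - k) (by omega) (by omega)
  have h₃ := Nat.choose_eq_choose_pred_add (n := n - u) (k := k - 1) (by omega) (by omega)
  simp only [franklCard, Nat.add_sub_cancel, show n + 1 - u - 1 = n - u by omega,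
    show n + 1 - k - 1 = n - k by omega, show n - (k - 1) - 1 = n - k by omega, h₁, h₂, h₃]
  push_cast
  ring

end Binomial

section Subfamily

variable {α : Type*} [DecidableEq α] {F : Finset (Finset α)} {G : Finset α} {k : ℕ}

lemma memberSubfamily_subset_powersetCard (hF : F ⊆ powersetCard k G) (x : α) :
    F.memberSubfamily x ⊆ powersetCard (k - 1) (G.erase x) := fun S hS ↦ by
  obtain ⟨hS, hxS⟩ := mem_memberSubfamily.1 hS
  obtain ⟨hSG, hS⟩ := mem_powersetCard.1 (hF hS)
  rw [card_insert_of_notMem hxS] at hS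
  exact mem_powersetCard.2
    ⟨subset_erase.2 ⟨(subset_insert x S).trans hSG, hxS⟩, Nat.eq_sub_of_add_eq hS⟩

lemma nonMemberSubfamily_subset_powersetCard (hF : F ⊆ powersetCard k G) (x : α) :
    F.nonMemberSubfamily x ⊆ powersetCard k (G.erase x) := fun S hS ↦ by
  obtain ⟨hS, hxS⟩ := mem_nonMemberSubfamily.1 hS
  obtain ⟨hSG, hS⟩ := mem_powersetCard.1 (hF hS)
  exact mem_powersetCard.2 ⟨subset_erase.2 ⟨hSG, hxS⟩, hS⟩

end Subfamily

section Falling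

variable {α : Type*} [DecidableEq α] {C D : Finset (Finset α)} {M : Finset α} {a c r : ℕ}

lemma falling_subset_powersetCard (hC : C ⊆ powersetCard c M) :
    falling a C ⊆ powersetCard a M := fun S hS ↦ by
  obtain ⟨⟨T, hT, hST⟩, hS⟩ := mem_falling.1 hS
  exact mem_powersetCard.2 ⟨hST.trans (mem_powersetCard.1 (hC hT)).1, hS⟩

lemma falling_powersetCard (hac : a ≤ c) (hcM : c ≤ #M) :
    falling a (powersetCard c M) = powersetCard a M := by
  refine (falling_subset_powersetCard Subset.rfl).antisymm fun S hS ↦ ?_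
  obtain ⟨hSM, hS⟩ := mem_powersetCard.1 hS
  obtain ⟨T, hST, hTM, hT⟩ := exists_subsuperset_card_eq hSM (hS.trans_le hac) hcM
  exact mem_falling.2 ⟨⟨T, mem_powersetCard.2 ⟨hTM, hT⟩, hST⟩, hS⟩

lemma falling_eq_shadow_iterate (hC : (C : Set (Finset α)).Sized c) (hac : a ≤ c) :
    falling a C = ∂^[c - a] C := by
  ext S
  rw [mem_falling, mem_shadow_iterate_iff_exists_mem_card_add]
  constructor
  · rintro ⟨⟨T, hT, hST⟩, hS⟩
    exact ⟨T, hT, hST, by rw [hC hT]; omega⟩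
  · rintro ⟨T, hT, hST, hcard⟩
    exact ⟨⟨T, hT, hST⟩, by rw [hC hT] at hcard; omega⟩

lemma falling_memberSubfamily_subset (a : ℕ) (x : α) (C : Finset (Finset α)) :
    falling a (C.memberSubfamily x) ⊆ (falling (a + 1) C).memberSubfamily x := by
  intro S hS
  simp only [mem_falling, mem_memberSubfamily] at hS ⊢
  obtain ⟨⟨T, ⟨hT, hxT⟩, hST⟩, hS⟩ := hS
  have hxS : x ∉ S := fun hx ↦ hxT (hST hx)
  exact ⟨⟨⟨insert x T, hT, insert_subset_insert x hST⟩, by rw [card_insert_of_notMem hxS, hS]⟩, hxS⟩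

lemma falling_nonMemberSubfamily_subset (a : ℕ) (x : α) (C : Finset (Finset α)) :
    falling a (C.nonMemberSubfamily x) ⊆ (falling a C).nonMemberSubfamily x := by
  intro S hS
  simp only [mem_falling, mem_nonMemberSubfamily] at hS ⊢
  obtain ⟨⟨T, ⟨hT, hxT⟩, hST⟩, hS⟩ := hS
  exact ⟨⟨⟨T, hT, hST⟩, hS⟩, fun hx ↦ hxT (hST hx)⟩

theorem card_mul_choose_le_card_falling_mul_choose (hac : a ≤ c) (hC : C ⊆ powersetCard c M) :
    #C * (#M).choose a ≤ #(falling a C) * (#M).choose c := by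
  have hcount : #C * c.choose a ≤ #(falling a C) * (#M - a).choose (c - a) := by
    refine card_mul_le_card_mul (fun S T ↦ T ⊆ S) (fun S hS ↦ ?_) (fun T hT ↦ ?_)
    · rw [← (mem_powersetCard.1 (hC hS)).2, ← card_powersetCard]
      refine card_le_card fun T hT ↦ ?_
      obtain ⟨hTS, hT⟩ := mem_powersetCard.1 hT
      exact (mem_bipartiteAbove _).2 ⟨mem_falling.2 ⟨⟨S, hS, hTS⟩, hT⟩, hTS⟩
    · obtain ⟨hTM, hT⟩ := mem_powersetCard.1 (falling_subset_powersetCard hC hT)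
      rw [← hT, ← card_filter_powersetCard_subset T M c hTM (hT.trans_le hac)]
      exact card_le_card (filter_subset_filter _ hC)
  rcases lt_or_ge #M c with hcM | -
  · rw [powersetCard_eq_empty.2 hcM, subset_empty] at hC
    simp only [hC, card_empty, zero_mul, zero_le]
  refine Nat.le_of_mul_le_mul_right ?_ (Nat.choose_pos hac)
  calc #C * (#M).choose a * c.choose a
      = #C * c.choose a * (#M).choose a := by ring
    _ ≤ #(falling a C) * (#M - a).choose (c - a) * (#M).choose a := by gcongr
    _ = #(falling a C) * ((#M).choose a * (#M - a).choose (c - a)) := by ring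
    _ = #(falling a C) * (#M).choose c * c.choose a := by rw [← Nat.choose_mul hac, mul_assoc]

end Falling

section InitSeg

variable {α : Type*} [LinearOrder α] {A B : Finset (Finset α)} {r : ℕ}

lemma isInitSeg_powersetCard {L : Finset α} (hL : IsLowerSet (L : Set α)) (r : ℕ) :
    Colex.IsInitSeg (powersetCard r L) r := by
  refine ⟨Set.sized_powersetCard _ _, fun S T hS ⟨hTS, hT⟩ ↦ mem_powersetCard.2 ⟨fun x hx ↦ ?_, hT⟩⟩
  by_contra hxL
  exact lt_irrefl x <| Colex.forall_lt_mono hTS.le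
    (fun y hy ↦ lt_of_not_ge fun hxy ↦ hxL (hL hxy ((mem_powersetCard.1 hS).1 hy))) x hx

lemma isInitSeg_subset_of_card_le (hA : Colex.IsInitSeg A r) (hB : Colex.IsInitSeg B r)
    (hAB : #A ≤ #B) : A ⊆ B :=
  (hA.total hB).elim id fun hBA ↦ (eq_of_subset_of_card_le hBA hAB).ge

lemma exists_isInitSeg_card_eq (hA : Colex.IsInitSeg A r) {q : ℕ} (hq : q ≤ #A) :
    ∃ C : Finset (Finset α), Colex.IsInitSeg C r ∧ #C = q := by
  induction hq using Nat.decreasingInduction with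
  | self => exact ⟨A, hA, rfl⟩
  | of_succ q _ ih =>
    obtain ⟨C, hC, hCq⟩ := ih
    obtain ⟨S, hS, hmax⟩ := C.exists_max_image toColex (card_pos.1 (by omega))
    refine ⟨C.erase S, ⟨fun T hT ↦ hC.1 (mem_of_mem_erase hT), fun T R hT hR ↦ ?_⟩, by
      rw [card_erase_of_mem hS, hCq, Nat.add_sub_cancel]⟩
    have hTC := mem_of_mem_erase hT
    refine mem_erase.2 ⟨?_, hC.2 hTC hR⟩
    rintro rfl
    exact (hmax T hTC).not_gt hR.1

end InitSeg

section KruskalKatona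

variable {m a c : ℕ}

lemma powersetCard_Iio_subset {I : Finset (Finset (Fin m))} (hI : Colex.IsInitSeg I c) {z : Fin m}
    (hz : (z : ℕ).choose c ≤ #I) : powersetCard c (Iio z) ⊆ I :=
  isInitSeg_subset_of_card_le
    (isInitSeg_powersetCard (by rw [coe_Iio]; exact isLowerSet_Iio z) c) hI
    (by rwa [card_powersetCard, Fin.card_Iio])

lemma subset_powersetCard_Iic {I : Finset (Finset (Fin m))} (hI : Colex.IsInitSeg I c) {z : Fin m}
    (hz : #I ≤ (z + 1 : ℕ).choose c) : I ⊆ powersetCard c (Iic z) :=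
  isInitSeg_subset_of_card_le hI
    (isInitSeg_powersetCard (by rw [coe_Iic]; exact isLowerSet_Iic z) c)
    (by rwa [card_powersetCard, Fin.card_Iic])

lemma sub_choose_mul_choose_le_of_isInitSeg {I : Finset (Finset (Fin m))} {z : Fin m}
    (hI : Colex.IsInitSeg I (c + 1)) (hac : a ≤ c) (hcz : c < z)
    (hzI : (z : ℕ).choose (c + 1) ≤ #I) (hIz : #I ≤ (z + 1 : ℕ).choose (c + 1)) :
    ((#I : ℤ) - (z : ℕ).choose (c + 1)) * (z : ℕ).choose a ≤
      (#(falling (a + 1) I) - (z : ℕ).choose (a + 1)) * (z : ℕ).choose c := by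
  have hlow := powersetCard_Iio_subset hI hzI
  have hupp := subset_powersetCard_Iic hI hIz
  have hnon : I.nonMemberSubfamily z = powersetCard (c + 1) (Iio z) :=
    ((nonMemberSubfamily_subset_powersetCard hupp z).trans_eq (by rw [Iic_erase])).antisymm
      fun S hS ↦ mem_nonMemberSubfamily.2
        ⟨hlow hS, fun hzS ↦ lt_irrefl z (mem_Iio.1 ((mem_powersetCard.1 hS).1 hzS))⟩
  have hmem : I.memberSubfamily z ⊆ powersetCard c (Iio z) :=
    (memberSubfamily_subset_powersetCard hupp z).trans_eq (by rw [Iic_erase, Nat.add_sub_cancel])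
  have hlym := card_mul_choose_le_card_falling_mul_choose hac hmem
  have hI' := card_memberSubfamily_add_card_nonMemberSubfamily z I
  have hF := card_memberSubfamily_add_card_nonMemberSubfamily z (falling (a + 1) I)
  have h₁ := card_le_card (falling_memberSubfamily_subset a z I)
  have h₂ := card_le_card (falling_nonMemberSubfamily_subset (a + 1) z I)
  rw [hnon, card_powersetCard, Fin.card_Iio] at hI'
  rw [hnon, falling_powersetCard (by omega) (by rw [Fin.card_Iio]; omega), card_powersetCard,
    Fin.card_Iio] at h₂
  rw [Fin.card_Iio] at hlym
  have hD : #(falling a (I.memberSubfamily z)) + (z : ℕ).choose (a + 1) ≤ #(falling (a + 1) I) := by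
    omega
  rw [← hI']
  zify at hlym hD
  push_cast
  calc _ = (#(I.memberSubfamily z) : ℤ) * (z : ℕ).choose a := by ring
    _ ≤ #(falling a (I.memberSubfamily z)) * (z : ℕ).choose c := hlym
    _ ≤ _ := by gcongr; linarith

variable {α : Type*} [DecidableEq α] {C : Finset (Finset α)} {M : Finset α}

lemma exists_sized_card_falling_le (hC : C ⊆ powersetCard c M) (a : ℕ) :
    ∃ A : Finset (Finset (Fin #M)), (A : Set (Finset (Fin #M))).Sized c ∧ #A = #C ∧
      #(falling a A) ≤ #(falling a C) := by
  let f : Fin #M ↪ α := M.equivFin.symm.toEmbedding.trans (Function.Embedding.subtype (· ∈ M))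
  have hf : univ.map f = M := by
    rw [← map_map, map_univ_equiv, univ_eq_attach, attach_map_val]
  have hpre : (univ.filter (·.map f ∈ C)).map (mapEmbedding f).toEmbedding = C := by
    ext S
    simp only [mem_map, mem_filter, mem_univ, true_and, RelEmbedding.coe_toEmbedding,
      mapEmbedding_apply]
    refine ⟨fun ⟨_, hT, hTS⟩ ↦ hTS ▸ hT, fun hS ↦ ?_⟩
    obtain ⟨T, -, rfl⟩ := subset_map_iff.1 (hf.symm ▸ (mem_powersetCard.1 (hC hS)).1)
    exact ⟨T, hS, rfl⟩
  refine ⟨univ.filter (·.map f ∈ C), fun S hS ↦ ?_, ?_, ?_⟩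
  · rw [← card_map f]
    exact (mem_powersetCard.1 (hC (mem_filter.1 hS).2)).2
  · rw [← card_map (mapEmbedding f).toEmbedding, hpre]
  · rw [← card_map (mapEmbedding f).toEmbedding]
    refine card_le_card fun S hS ↦ ?_
    obtain ⟨R, hR, rfl⟩ := mem_map.1 hS
    obtain ⟨⟨T, hT, hRT⟩, hRa⟩ := mem_falling.1 hR
    exact mem_falling.2
      ⟨⟨T.map f, (mem_filter.1 hT).2, map_subset_map.2 hRT⟩, (card_map f).trans hRa⟩

theorem exists_isInitSeg_card_falling_le (hC : C ⊆ powersetCard c M) (hac : a ≤ c) :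
    ∃ I : Finset (Finset (Fin #M)), Colex.IsInitSeg I c ∧ #I = #C ∧
      #(falling a I) ≤ #(falling a C) := by
  obtain ⟨A, hA, hAC, hfall⟩ := exists_sized_card_falling_le hC a
  have huniv : Colex.IsInitSeg (powersetCard c (univ : Finset (Fin #M))) c :=
    isInitSeg_powersetCard (by rw [coe_univ]; exact isLowerSet_univ) c
  obtain ⟨I, hI, hIA⟩ := exists_isInitSeg_card_eq huniv
    (card_le_card hA.subset_powersetCard_univ)
  refine ⟨I, hI, hIA.trans hAC, le_trans ?_ hfall⟩
  rw [falling_eq_shadow_iterate hI.1 hac, falling_eq_shadow_iterate hA hac]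
  exact iterated_kk hA hIA.le hI

theorem choose_le_card_falling {N : ℕ} (hC : C ⊆ powersetCard c M) (hac : a ≤ c) (hcN : c ≤ N)
    (hN : N ≤ #M) (hNC : N.choose c ≤ #C) : N.choose a ≤ #(falling a C) := by
  obtain ⟨I, hI, hIC, hfall⟩ := exists_isInitSeg_card_falling_le hC hac
  rw [← hIC] at hNC
  rw [falling_eq_shadow_iterate hI.1 hac] at hfall
  simpa only [Nat.sub_sub_self hac] using
    (kruskal_katona_lovasz_form (Nat.sub_le c a) hcN hN hI.1 hNC).trans hfall

theorem sub_choose_mul_choose_le {N : ℕ} (hC : C ⊆ powersetCard (c + 1) M) (hac : a ≤ c)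
    (hcN : c < N) (hN : N < #M) (hNC : N.choose (c + 1) ≤ #C) (hCN : #C ≤ (N + 1).choose (c + 1)) :
    ((#C : ℤ) - N.choose (c + 1)) * N.choose a ≤
      (#(falling (a + 1) C) - N.choose (a + 1)) * N.choose c := by
  obtain ⟨I, hI, hIC, hfall⟩ := exists_isInitSeg_card_falling_le hC (Nat.add_le_add_right hac 1)
  rw [← hIC] at hNC hCN ⊢
  refine (sub_choose_mul_choose_le_of_isInitSeg (z := ⟨N, hN⟩) hI hac hcN hNC hCN).trans ?_
  gcongr

lemma sub_le_of_chord {x x₀ x₁ y y₀ y₁ t : ℤ} (h₀₁ : x₀ < x₁) (h₀ : x₀ ≤ x) (h₁ : x ≤ x₁)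
    (hchord : (x - x₀) * (y₁ - y₀) ≤ (y - y₀) * (x₁ - x₀)) (ht₀ : x₀ - y₀ ≤ t)
    (ht₁ : x₁ - y₁ ≤ t) : x - y ≤ t := by
  refine le_of_mul_le_mul_left ?_ (sub_pos.2 h₀₁)
  calc (x₁ - x₀) * (x - y) ≤ (x₁ - x) * (x₀ - y₀) + (x - x₀) * (x₁ - y₁) := by linarith
    _ ≤ (x₁ - x) * t + (x - x₀) * t := by gcongr
    _ = (x₁ - x₀) * t := by ring

theorem card_sub_card_falling_le {N₁ N₂ : ℕ} {t : ℤ} (hC : C ⊆ powersetCard c M) (ha : 1 ≤ a)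
    (hac : a ≤ c) (hcN : c ≤ N₁) (hN : N₁ ≤ N₂) (hNM : N₂ ≤ #M) (h₁ : N₁.choose c ≤ #C)
    (h₂ : #C ≤ N₂.choose c) (ht : ∀ N ∈ Icc N₁ N₂, (N.choose c : ℤ) - N.choose a ≤ t) :
    (#C : ℤ) - #(falling a C) ≤ t := by
  induction N₂, hN using Nat.le_induction with
  | base =>
    have := choose_le_card_falling hC hac hcN hNM h₁
    have := ht N₁ (left_mem_Icc.2 le_rfl)
    omega
  | succ N hN ih =>
    rcases le_or_gt #C (N.choose c) with hCN | hCN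
    · exact ih (by omega) hCN fun K hK ↦ ht K (Icc_subset_Icc_right (Nat.le_succ N) hK)
    obtain ⟨a, rfl⟩ := Nat.exists_eq_add_of_le' ha
    obtain ⟨c, rfl⟩ := Nat.exists_eq_add_of_le' (ha.trans hac)
    have hchord := sub_choose_mul_choose_le hC (Nat.le_of_succ_le_succ hac) (by omega) (by omega)
      hCN.le h₂
    have pascal (r : ℕ) : (N.choose r : ℤ) = (N + 1).choose (r + 1) - N.choose (r + 1) := by
      rw [Nat.choose_succ_succ']; push_cast; ring
    rw [pascal a, pascal c] at hchord
    exact sub_le_of_chord (by exact_mod_cast hCN.trans_le h₂) (by exact_mod_cast hCN.le)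
      (by exact_mod_cast h₂) hchord (ht N (mem_Icc.2 ⟨hN, Nat.le_succ N⟩))
      (ht (N + 1) (mem_Icc.2 ⟨by omega, le_rfl⟩))

end KruskalKatona

/-- Two set families are cross-intersecting if every member of the first meets every member of the
second. -/
def CrossIntersecting {α : Type*} (A B : Finset (Finset α)) : Prop :=
  ∀ ⦃S⦄, S ∈ A → ∀ ⦃T⦄, T ∈ B → ¬Disjoint S T

namespace CrossIntersecting

variable {α : Type*} {A B : Finset (Finset α)} {M : Finset α} {a b c r : ℕ}

protected lemma symm (hAB : CrossIntersecting A B) : CrossIntersecting B A :=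
  fun _ hS _ hT ↦ fun hST ↦ hAB hT hS hST.symm

lemma memberSubfamily_nonMemberSubfamily [DecidableEq α] (hAB : CrossIntersecting A B) (x : α) :
    CrossIntersecting (A.memberSubfamily x) (B.nonMemberSubfamily x) := fun S hS T hT hST ↦ by
  rw [mem_memberSubfamily] at hS
  rw [mem_nonMemberSubfamily] at hT
  exact hAB hS.1 hT.1 (disjoint_insert_left.2 ⟨hT.2, hST⟩)

/-- Take `C` to consist of the complements `M \ T` of the members `T` of `B`: no member of `A` lies
in such a complement. -/
lemma exists_card_add_card_falling_le [DecidableEq α] (hAB : CrossIntersecting A B)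
    (hA : A ⊆ powersetCard a M) (hB : B ⊆ powersetCard b M) (hbc : b + c = #M) :
    ∃ C ⊆ powersetCard c M, #C = #B ∧ #A + #(falling a C) ≤ (#M).choose a := by
  have hBM (T) (hT : T ∈ B) : T ⊆ M := (mem_powersetCard.1 (hB hT)).1
  have hC : B.image (M \ ·) ⊆ powersetCard c M := image_subset_iff.2 fun T hT ↦
    mem_powersetCard.2 ⟨sdiff_subset, by
      rw [card_sdiff_of_subset (hBM T hT), (mem_powersetCard.1 (hB hT)).2]; omega⟩
  refine ⟨B.image (M \ ·), hC, card_image_of_injOn fun S hS T hT h ↦ ?_, ?_⟩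
  · rw [← Finset.sdiff_sdiff_eq_self (hBM S hS), h, Finset.sdiff_sdiff_eq_self (hBM T hT)]
  · have hdisj : Disjoint A (falling a (B.image (M \ ·))) := disjoint_left.2 fun S hS hSC ↦ by
      obtain ⟨⟨_, hR, hSR⟩, -⟩ := mem_falling.1 hSC
      obtain ⟨T, hT, rfl⟩ := mem_image.1 hR
      exact hAB hS hT (disjoint_of_subset_left hSR sdiff_disjoint)
    rw [← card_union_of_disjoint hdisj, ← card_powersetCard]
    exact card_le_card (union_subset hA (falling_subset_powersetCard hC))

lemma card_add_choose_le {N : ℕ} (hAB : CrossIntersecting A B) (hA : A ⊆ powersetCard a M)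
    (hB : B ⊆ powersetCard b M) (hbc : b + c = #M) (hac : a ≤ c) (hcN : c ≤ N) (hN : N ≤ #M)
    (hNB : N.choose c ≤ #B) : #A + N.choose a ≤ (#M).choose a := by
  classical
  obtain ⟨C, hC, hCB, hCA⟩ := hAB.exists_card_add_card_falling_le hA hB hbc
  have := choose_le_card_falling hC hac hcN hN (hNB.trans_eq hCB.symm)
  omega

lemma card_add_card_le {N₁ N₂ : ℕ} {t : ℤ} (hAB : CrossIntersecting A B)
    (hA : A ⊆ powersetCard a M) (hB : B ⊆ powersetCard b M) (hbc : b + c = #M) (ha : 1 ≤ a)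
    (hac : a ≤ c) (hcN : c ≤ N₁) (hN : N₁ ≤ N₂) (hNM : N₂ ≤ #M) (h₁ : N₁.choose c ≤ #B)
    (h₂ : #B ≤ N₂.choose c) (ht : ∀ N ∈ Icc N₁ N₂, (N.choose c : ℤ) - N.choose a ≤ t) :
    (#A + #B : ℤ) ≤ (#M).choose a + t := by
  classical
  obtain ⟨C, hC, hCB, hCA⟩ := hAB.exists_card_add_card_falling_le hA hB hbc
  rw [← hCB] at h₁ h₂ ⊢
  have := card_sub_card_falling_le hC ha hac hcN hN hNM h₁ h₂ ht
  omega

lemma card_add_card_le_choose_of_add_eq (hAB : CrossIntersecting A B) (hA : A ⊆ powersetCard a M)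
    (hB : B ⊆ powersetCard b M) (hab : a + b = #M) : #A + #B ≤ (#M).choose a := by
  classical
  obtain ⟨C, hC, hCB, hCA⟩ := hAB.exists_card_add_card_falling_le hA hB ((add_comm b a).trans hab)
  have : C ⊆ falling a C := fun S hS ↦
    mem_falling.2 ⟨⟨S, hS, Subset.rfl⟩, (mem_powersetCard.1 (hC hS)).2⟩
  have := card_le_card this
  omega

lemma card_add_card_le_choose (hAB : CrossIntersecting A B) (hA : A ⊆ powersetCard a M)
    (hB : B ⊆ powersetCard b M) (hbc : b + c = #M) (ha : 1 ≤ a) (hac : a ≤ c) (hab : a ≤ b)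
    (hBc : #B ≤ (a + c).choose c) : #A + #B ≤ (#M).choose a := by
  rcases B.eq_empty_or_nonempty with rfl | hne
  · rw [card_empty, add_zero, ← card_powersetCard]
    exact card_le_card hA
  have := hAB.card_add_card_le hA hB hbc ha hac le_rfl (Nat.le_add_left c a) (by omega)
    (by rw [Nat.choose_self]; exact hne.card_pos) hBc (t := 0) fun N hN ↦ by
      have := choose_le_choose_of_add_le hac (mem_Icc.1 hN).2
      omega
  omega

lemma card_add_card_le_two_mul_choose (hAB : CrossIntersecting A B) (hA : A ⊆ powersetCard r M)
    (hB : B ⊆ powersetCard r M) (hr : 2 ≤ r) (hrM : 2 * r ≤ #M)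
    (hA' : (#M - 2).choose (#M - r) ≤ #A) (hB' : (#M - 2).choose (#M - r) ≤ #B) :
    #A + #B ≤ 2 * (#M - 1).choose (r - 1) := by
  have of_le {A B : Finset (Finset α)} (hAB : CrossIntersecting A B)
      (hA : A ⊆ powersetCard r M) (hB : B ⊆ powersetCard r M)
      (h₁ : (#M - 2).choose (#M - r) ≤ #B) (h₂ : #B ≤ (#M - 1).choose (#M - r)) :
      #A + #B ≤ 2 * (#M - 1).choose (r - 1) := by
    have := hAB.card_add_card_le hA hB (c := #M - r) (by omega) (by omega) (by omega) (by omega)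
      (by omega) (by omega) h₁ h₂ fun N hN ↦ (choose_sub_choose_eq hr (by omega) hN).le
    omega
  rcases le_or_gt #B ((#M - 1).choose (#M - r)) with hB'' | hB''
  · exact of_le hAB hA hB hB' hB''
  · have hA'' := hAB.card_add_choose_le hA hB (c := #M - r) (by omega) (by omega) (by omega)
      (Nat.sub_le _ 1) hB''.le
    have hsymm : (#M - 1).choose (#M - r) = (#M - 1).choose (r - 1) :=
      Nat.choose_symm_of_eq_add (by omega)
    have pascal := Nat.choose_eq_choose_pred_add (n := #M) (k := r) (by omega) (by omega)
    rw [add_comm]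
    exact of_le hAB.symm hB hA hA' (by omega)

end CrossIntersecting

section Intersecting

variable {α : Type*} [DecidableEq α] {F : Finset (Finset α)} {G : Finset α} {k n u : ℕ} {i j : α}

lemma crossIntersecting_self :
    CrossIntersecting F F ↔ (F : Set (Finset α)).Intersecting := Iff.rfl

lemma nonMemberSubfamily_comm (F : Finset (Finset α)) (i j : α) :
    (F.nonMemberSubfamily i).nonMemberSubfamily j =
      (F.nonMemberSubfamily j).nonMemberSubfamily i := by
  ext S
  simp only [mem_nonMemberSubfamily]
  tauto

lemma memberSubfamily_nonMemberSubfamily_comm (F : Finset (Finset α)) (hij : i ≠ j) :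
    (F.nonMemberSubfamily i).memberSubfamily j = (F.memberSubfamily j).nonMemberSubfamily i := by
  ext S
  simp only [mem_nonMemberSubfamily, mem_memberSubfamily, mem_insert]
  tauto

lemma card_le_franklCard_of_card_nonMemberSubfamily_le (hF : F ⊆ powersetCard k G)
    (hint : (F : Set (Finset α)).Intersecting) (hi : i ∈ G) (hu : 2 ≤ u) (huk : u ≤ k)
    (hkG : 2 * k ≤ #G) (h₁ : (#G - u - 1).choose (#G - k - 1) ≤ #(F.nonMemberSubfamily i))
    (h₂ : #(F.nonMemberSubfamily i) ≤ (#G - 3).choose (#G - k - 1)) :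
    (#F : ℤ) ≤ franklCard #G k u := by
  have hcard := card_erase_of_mem hi
  have hanti := antitoneOn_choose_sub_choose (a := k - 1) (c := #G - k - 1) (by omega) (by omega)
  have := (crossIntersecting_self.2 hint).memberSubfamily_nonMemberSubfamily i |>.card_add_card_le
    (memberSubfamily_subset_powersetCard hF i) (nonMemberSubfamily_subset_powersetCard hF i)
    (c := #G - k - 1) (by omega) (by omega) (by omega) (by omega) (by omega) (by omega) h₁ h₂
    fun N hN ↦ hanti (Set.mem_Iio.2 (by omega)) (Set.mem_Iio.2 (by rw [mem_Icc] at hN; omega))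
      (mem_Icc.1 hN).1
  rw [← card_memberSubfamily_add_card_nonMemberSubfamily i F, franklCard, ← hcard]
  push_cast
  simp only at this
  linarith

lemma card_le_franklCard_of_card_nonMemberSubfamily_pair_lt (hF : F ⊆ powersetCard k G)
    (hint : (F : Set (Finset α)).Intersecting) (hi : i ∈ G) (hj : j ∈ G) (hij : i ≠ j) (hk : 3 ≤ k)
    (hkG : 2 * k ≤ #G) (hi' : (#G - 3).choose (#G - k - 1) < #(F.nonMemberSubfamily i))
    (hj' : (#G - 3).choose (#G - k - 1) < #(F.nonMemberSubfamily j))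
    (hZ : #((F.nonMemberSubfamily j).nonMemberSubfamily i) < (#G - 4).choose (#G - k - 1)) :
    (#F : ℤ) ≤ franklCard #G k 2 := by
  have hM : #((G.erase j).erase i) = #G - 2 := by
    rw [card_erase_of_mem (mem_erase.2 ⟨hij, hi⟩), card_erase_of_mem hj]; rfl
  have hmem := memberSubfamily_subset_powersetCard hF j
  have hnon := nonMemberSubfamily_subset_powersetCard hF j
  have hcross := (crossIntersecting_self.2 hint).memberSubfamily_nonMemberSubfamily j
  have pascal := Nat.choose_eq_choose_pred_add (n := #G - 3) (k := #G - k - 1) (by omega) (by omega)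
  have hle : (#G - 4).choose (#G - k - 1) ≤ (#G - 4).choose (#G - k - 2) :=
    choose_le_choose_of_add_le (by omega) (by omega)
  have hWZ := (hcross.memberSubfamily_nonMemberSubfamily i).card_add_card_le_choose
    (memberSubfamily_subset_powersetCard hmem i) (nonMemberSubfamily_subset_powersetCard hnon i)
    (c := #G - k - 2) (by omega) (by omega) (by omega) (by omega)
    (by rw [show k - 1 - 1 + (#G - k - 2) = #G - 4 by omega]; omega)
  have hsplit_i := card_memberSubfamily_add_card_nonMemberSubfamily j (F.nonMemberSubfamily i)
  rw [memberSubfamily_nonMemberSubfamily_comm F hij, nonMemberSubfamily_comm] at hsplit_i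
  have hsplit_j := card_memberSubfamily_add_card_nonMemberSubfamily i (F.nonMemberSubfamily j)
  simp only [show #G - 3 - 1 = #G - 4 by omega, show #G - k - 1 - 1 = #G - k - 2 by omega] at pascal
  have hXY := (hcross.symm.memberSubfamily_nonMemberSubfamily i).card_add_card_le_two_mul_choose
    (memberSubfamily_subset_powersetCard hnon i) (nonMemberSubfamily_subset_powersetCard hmem i)
    (by omega) (by omega)
  rw [hM, show #G - 2 - 2 = #G - 4 by omega, show #G - 2 - (k - 1) = #G - k - 1 by omega] at hXY
  have hsplit := card_memberSubfamily_add_card_nonMemberSubfamily j F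
  have hsplit_mem := card_memberSubfamily_add_card_nonMemberSubfamily i (F.memberSubfamily j)
  rw [franklCard_two (by omega) (by omega)]
  rw [hM, show k - 1 - 1 = k - 2 by omega] at hWZ
  rw [show k - 1 - 1 = k - 2 by omega, show #G - 2 - 1 = #G - 3 by omega] at hXY
  have := hXY (by omega) (by omega)
  omega

lemma card_le_franklCard_succ (hF : F ⊆ powersetCard k G)
    (hint : (F : Set (Finset α)).Intersecting) (hi : i ∈ G) (hj : j ∈ G) (hij : i ≠ j)
    (hG : #G = n + 1) (hk : 2 ≤ k) (hkn : 2 * k ≤ n)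
    (hdiv : (n - 2).choose (n - k) < #(F.nonMemberSubfamily i))
    (hnon : (n - 3).choose (n - k - 1) < #((F.nonMemberSubfamily j).nonMemberSubfamily i) →
      (#(F.nonMemberSubfamily j) : ℤ) ≤ franklCard n k 2)
    (hmem : (n - 3).choose (n - k) < #((F.memberSubfamily j).nonMemberSubfamily i) →
      3 ≤ k ∧ (#(F.memberSubfamily j) : ℤ) ≤ franklCard n (k - 1) 2) :
    (#F : ℤ) ≤ franklCard (n + 1) k 2 := by
  have hM : #((G.erase j).erase i) = n - 1 := by
    rw [card_erase_of_mem (mem_erase.2 ⟨hij, hi⟩), card_erase_of_mem hj, hG]; rfl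
  have hFm := memberSubfamily_subset_powersetCard hF j
  have hFn := nonMemberSubfamily_subset_powersetCard hF j
  have hcross := (crossIntersecting_self.2 hint).memberSubfamily_nonMemberSubfamily j
  have hmm (h : (n - 3).choose (n - k - 1) < #((F.nonMemberSubfamily j).nonMemberSubfamily i)) :=
    (hcross.memberSubfamily_nonMemberSubfamily i).card_add_choose_le
      (memberSubfamily_subset_powersetCard hFm i) (nonMemberSubfamily_subset_powersetCard hFn i)
      (c := n - k - 1) (by omega) (by omega) (by omega) (by omega) h.le
  have hnm (hk : 3 ≤ k)
      (h : (n - 3).choose (n - k) < #((F.memberSubfamily j).nonMemberSubfamily i)) :=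
    (hcross.symm.memberSubfamily_nonMemberSubfamily i).card_add_choose_le
      (memberSubfamily_subset_powersetCard hFn i) (nonMemberSubfamily_subset_powersetCard hFm i)
      (c := n - k) (by omega) (by omega) (by omega) (by omega) h.le
  have hsplit_i := card_memberSubfamily_add_card_nonMemberSubfamily j (F.nonMemberSubfamily i)
  rw [memberSubfamily_nonMemberSubfamily_comm F hij, nonMemberSubfamily_comm] at hsplit_i
  have hsplit := card_memberSubfamily_add_card_nonMemberSubfamily j F
  have hsplit_mem := card_memberSubfamily_add_card_nonMemberSubfamily i (F.memberSubfamily j)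
  have hsplit_non := card_memberSubfamily_add_card_nonMemberSubfamily i (F.nonMemberSubfamily j)
  have pascal := Nat.choose_eq_choose_pred_add (n := n - 2) (k := n - k) (by omega) (by omega)
  rw [show n - 2 - 1 = n - 3 by omega] at pascal
  rw [hM] at hmm hnm
  rw [franklCard_succ hk (by omega) (by omega)]
  simp only [franklCard, show n - 2 - 1 = n - 3 by omega,
    show n - (k - 1) - 1 = n - k by omega] at hnon hmem ⊢
  omega

lemma card_le_choose_of_card_eq_two_mul (hF : F ⊆ powersetCard k G)
    (hint : (F : Set (Finset α)).Intersecting) (hi : i ∈ G) (hk : 1 ≤ k) (hG : #G = 2 * k) :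
    #F ≤ (#G - 1).choose (k - 1) := by
  rw [← card_memberSubfamily_add_card_nonMemberSubfamily i F, ← card_erase_of_mem hi]
  refine ((crossIntersecting_self.2 hint).memberSubfamily_nonMemberSubfamily i)
    |>.card_add_card_le_choose_of_add_eq (memberSubfamily_subset_powersetCard hF i)
      (nonMemberSubfamily_subset_powersetCard hF i) ?_
  rw [card_erase_of_mem hi]
  omega

end Intersecting

section Compression

variable {α : Type*} [DecidableEq α] {F : Finset (Finset α)} {G S : Finset α} {i j l : α} {k : ℕ}

lemma compress_singleton (i j : α) (S : Finset α) :
    UV.compress {i} {j} S = if i ∉ S ∧ j ∈ S then insert i (S.erase j) else S := by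
  simp only [UV.compress, disjoint_singleton_left, singleton_subset_iff]
  split_ifs with h
  · ext x
    simp only [sup_eq_union, mem_sdiff, mem_union, mem_singleton, mem_insert, mem_erase]
    grind
  · rfl

lemma isCompressed_iff {u v : Finset α} :
    UV.IsCompressed u v F ↔ ∀ S ∈ F, UV.compress u v S ∈ F := by
  refine ⟨fun h S hS ↦ h.eq ▸ UV.compress_mem_compression hS, fun h ↦ ?_⟩
  ext S
  rw [UV.mem_compression]
  exact ⟨fun hS ↦ hS.elim And.left fun ⟨hS, T, hT, hTS⟩ ↦ (hS (hTS ▸ h T hT)).elim,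
    fun hS ↦ Or.inl ⟨hS, h S hS⟩⟩

lemma sum_compression {β : Type*} [AddCommMonoid β] (u v : Finset α) (F : Finset (Finset α))
    (f : Finset α → β) :
    ∑ S ∈ 𝓒 u v F, f S =
      ∑ S ∈ F, if UV.compress u v S ∈ F then f S else f (UV.compress u v S) := by
  rw [UV.compression, sum_union UV.compress_disjoint, filter_image, sum_image UV.compress_injOn,
    ← sum_ite]

lemma compression_subset_powersetCard (hF : F ⊆ powersetCard k G) (hi : i ∈ G) (j : α) :
    𝓒 {i} {j} F ⊆ powersetCard k G := fun S hS ↦ by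
  obtain ⟨hS, -⟩ | ⟨-, T, hT, rfl⟩ := UV.mem_compression.1 hS
  · exact hF hS
  obtain ⟨hTG, hT⟩ := mem_powersetCard.1 (hF hT)
  have hcard : #(UV.compress {i} {j} T) = #T :=
    UV.card_compress (by rw [card_singleton, card_singleton]) T
  refine mem_powersetCard.2 ⟨?_, hcard.trans hT⟩
  rw [compress_singleton]
  split_ifs
  · exact insert_subset hi ((erase_subset j T).trans hTG)
  · exact hTG

lemma not_disjoint_of_mem_compression (hF : (F : Set (Finset α)).Intersecting) {R T : Finset α}
    (hR : R ∈ 𝓒 {i} {j} F) (hRF : R ∉ F) (hT : T ∈ 𝓒 {i} {j} F) (hTF : T ∈ F) :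
    ¬Disjoint R T := by
  have hiR : i ∈ R := singleton_subset_iff.1 (UV.le_of_mem_compression_of_notMem hR hRF)
  have hR' : (R ⊔ {j}) \ {i} ∈ F := UV.sup_sdiff_mem_of_mem_compression_of_notMem hR hRF
  rw [not_disjoint_iff]
  by_cases hiT : i ∈ T
  · exact ⟨i, hiR, hiT⟩
  by_cases hjT : j ∈ T
  · have hT' : insert i (T.erase j) ∈ F := by
      obtain ⟨-, hT⟩ | ⟨hT, -⟩ := UV.mem_compression.1 hT
      · rwa [compress_singleton, if_pos ⟨hiT, hjT⟩] at hT
      · exact (hT hTF).elim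
    obtain ⟨x, hxR, hxT⟩ := not_disjoint_iff.1 (hF hR' hT')
    simp only [sup_eq_union, mem_sdiff, mem_union, mem_insert, mem_erase, mem_singleton] at hxR hxT
    exact ⟨x, by tauto, by tauto⟩
  · obtain ⟨x, hxR, hxT⟩ := not_disjoint_iff.1 (hF hR' hTF)
    simp only [sup_eq_union, mem_sdiff, mem_union, mem_singleton] at hxR
    exact ⟨x, hxR.1.resolve_right fun h ↦ hjT (h ▸ hxT), hxT⟩

lemma intersecting_compression (hF : (F : Set (Finset α)).Intersecting) (i j : α) :
    (𝓒 {i} {j} F : Set (Finset α)).Intersecting := by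
  intro S hS T hT
  rw [mem_coe] at hS hT
  by_cases hSF : S ∈ F <;> by_cases hTF : T ∈ F
  · exact hF hSF hTF
  · exact fun h ↦ not_disjoint_of_mem_compression hF hT hTF hS hSF h.symm
  · exact not_disjoint_of_mem_compression hF hS hSF hT hTF
  · exact not_disjoint_iff.2 ⟨i, singleton_subset_iff.1 (UV.le_of_mem_compression_of_notMem hS hSF),
      singleton_subset_iff.1 (UV.le_of_mem_compression_of_notMem hT hTF)⟩

lemma card_nonMemberSubfamily_le_compression (F : Finset (Finset α)) (hl : l ≠ i) (j : α) :
    #(F.nonMemberSubfamily l) ≤ #((𝓒 {i} {j} F).nonMemberSubfamily l) := by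
  simp only [nonMemberSubfamily, card_filter]
  rw [sum_compression]
  refine sum_le_sum fun S _ ↦ ?_
  rw [compress_singleton]
  grind

lemma nonMemberSubfamily_pair_subset_compression (F : Finset (Finset α)) (i j : α) :
    (F.nonMemberSubfamily j).nonMemberSubfamily i ⊆ (𝓒 {i} {j} F).nonMemberSubfamily i := by
  intro S hS
  obtain ⟨⟨hS, hj⟩, hi⟩ := by simpa only [mem_nonMemberSubfamily] using hS
  refine mem_nonMemberSubfamily.2 ⟨UV.mem_compression.2 (Or.inl ⟨hS, ?_⟩), hi⟩
  rwa [compress_singleton, if_neg fun h ↦ hj h.2]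

lemma sum_sum_compression_lt {f : α → ℕ} (hij : f i < f j) (hF : ¬UV.IsCompressed {i} {j} F) :
    ∑ S ∈ 𝓒 {i} {j} F, ∑ x ∈ S, f x < ∑ S ∈ F, ∑ x ∈ S, f x := by
  have hmoved {S : Finset α} (hS : S ∈ F) (hSF : UV.compress {i} {j} S ∉ F) :
      ∑ x ∈ UV.compress {i} {j} S, f x < ∑ x ∈ S, f x := by
    rw [compress_singleton] at hSF ⊢
    split_ifs at hSF ⊢ with h
    · rw [sum_insert fun h' ↦ h.1 (mem_of_mem_erase h'), ← add_sum_erase S f h.2]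
      exact Nat.add_lt_add_right hij _
    · exact (hSF hS).elim
  obtain ⟨S, hS, hSF⟩ : ∃ S ∈ F, UV.compress {i} {j} S ∉ F := by
    simpa only [isCompressed_iff, not_forall, exists_prop] using hF
  rw [sum_compression]
  refine sum_lt_sum (fun T hT ↦ ?_) ⟨S, hS, by rw [if_neg hSF]; exact hmoved hS hSF⟩
  split_ifs with hTF
  · exact le_rfl
  · exact (hmoved hT hTF).le

end Compression

section Shifted

variable {α : Type*} [LinearOrder α] {F : Finset (Finset α)} {G S : Finset α} {i j p x : α} {k : ℕ}

/-- A family is shifted on the ground set `G` if replacing an element of `G` in a member by a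
smaller element of `G` never leads out of the family. -/
def IsShifted (G : Finset α) (F : Finset (Finset α)) : Prop :=
  ∀ ⦃i⦄, i ∈ G → ∀ ⦃j⦄, j ∈ G → i < j → UV.IsCompressed {i} {j} F

namespace IsShifted

lemma insert_erase_mem (hF : IsShifted G F) (hi : i ∈ G) (hj : j ∈ G) (hij : i < j) (hS : S ∈ F)
    (hiS : i ∉ S) (hjS : j ∈ S) : insert i (S.erase j) ∈ F := by
  have := isCompressed_iff.1 (hF hi hj hij) S hS
  rwa [compress_singleton, if_pos ⟨hiS, hjS⟩] at this

protected lemma nonMemberSubfamily (hF : IsShifted G F) (x : α) :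
    IsShifted (G.erase x) (F.nonMemberSubfamily x) := by
  intro i hi j hj hij
  rw [mem_erase] at hi hj
  refine isCompressed_iff.2 fun S hS ↦ ?_
  rw [mem_nonMemberSubfamily] at hS ⊢
  rw [compress_singleton]
  split_ifs with h
  · exact ⟨hF.insert_erase_mem hi.2 hj.2 hij hS.1 h.1 h.2, by
      rw [mem_insert, mem_erase]; tauto⟩
  · exact hS

protected lemma memberSubfamily (hF : IsShifted G F) (x : α) :
    IsShifted (G.erase x) (F.memberSubfamily x) := by
  intro i hi j hj hij
  rw [mem_erase] at hi hj
  refine isCompressed_iff.2 fun S hS ↦ ?_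
  rw [mem_memberSubfamily] at hS ⊢
  rw [compress_singleton]
  split_ifs with h
  · refine ⟨?_, by rw [mem_insert, mem_erase]; tauto⟩
    have := hF.insert_erase_mem hi.2 hj.2 hij hS.1 (by grind) (by grind)
    rwa [erase_insert_of_ne hj.1.symm, insert_comm] at this
  · exact hS

/-- If `insert x S` and `insert x T` meet only in `x`, replacing `x` in the first by an element of
`G` outside both makes them disjoint. -/
lemma intersecting_memberSubfamily (hF : IsShifted G F) (hFG : F ⊆ powersetCard k G)
    (hint : (F : Set (Finset α)).Intersecting) (hkG : 2 * k ≤ #G) (hx : x ∈ G)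
    (hmax : ∀ y ∈ G, y ≤ x) : (F.memberSubfamily x : Set (Finset α)).Intersecting := by
  intro S hS T hT hST
  simp only [mem_coe, mem_memberSubfamily] at hS hT
  obtain ⟨-, hSk⟩ := mem_powersetCard.1 (hFG hS.1)
  obtain ⟨-, hTk⟩ := mem_powersetCard.1 (hFG hT.1)
  have hcard : #(insert x S ∪ T) < #G := by
    rw [card_insert_of_notMem hT.2] at hTk
    have := card_union_le (insert x S) T
    omega
  obtain ⟨y, hyG, hy⟩ := exists_mem_notMem_of_card_lt_card hcard
  simp only [mem_union, mem_insert, not_or] at hy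
  obtain ⟨⟨hyx, hyS⟩, hyT⟩ := hy
  have := hF.insert_erase_mem hyG hx (lt_of_le_of_ne (hmax y hyG) hyx) hS.1
    (by rw [mem_insert]; tauto) (mem_insert_self x S)
  rw [erase_insert hS.2] at this
  exact hint this hT.1 (disjoint_insert_left.2 ⟨by rw [mem_insert, not_or]; exact ⟨hyx, hyT⟩,
    disjoint_insert_right.2 ⟨hS.2, hST⟩⟩)

lemma one_lt_of_nonMemberSubfamily_nonempty (hF : IsShifted G F) (hFG : F ⊆ powersetCard k G)
    (hint : (F : Set (Finset α)).Intersecting) (hp : p ∈ G) (hmin : ∀ y ∈ G, p ≤ y)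
    (hne : (F.nonMemberSubfamily p).Nonempty) : 1 < k := by
  obtain ⟨S, hS⟩ := hne
  obtain ⟨hS, hpS⟩ := mem_nonMemberSubfamily.1 hS
  obtain ⟨hSG, hSk⟩ := mem_powersetCard.1 (hFG hS)
  obtain ⟨j, hj, -⟩ := not_disjoint_iff.1 (hint hS hS)
  have hpj : p < j := lt_of_le_of_ne (hmin j (hSG hj)) fun h ↦ hpS (h ▸ hj)
  obtain ⟨y, hyS, hy⟩ := not_disjoint_iff.1
    (hint hS (hF.insert_erase_mem hp (hSG hj) hpj hS hpS hj))
  rw [mem_insert, mem_erase] at hy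
  rw [← hSk]
  exact one_lt_card.2 ⟨y, hyS, j, hj, (hy.resolve_left fun h ↦ hpS (h ▸ hyS)).1⟩

theorem card_le_franklCard (hF : IsShifted G F) (hFG : F ⊆ powersetCard k G)
    (hint : (F : Set (Finset α)).Intersecting) (hkG : 2 * k ≤ #G) (hp : p ∈ G)
    (hmin : ∀ y ∈ G, p ≤ y) (hdiv : (#G - 3).choose (#G - k - 1) < #(F.nonMemberSubfamily p)) :
    (#F : ℤ) ≤ franklCard #G k 2 := by
  induction G using Finset.induction_on_max generalizing F k with
  | empty => exact absurd hp (notMem_empty p)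
  | insert x G hx ih =>
    have hxG : x ∉ G := fun h ↦ lt_irrefl x (hx x h)
    have hk := hF.one_lt_of_nonMemberSubfamily_nonempty hFG hint hp hmin
      (card_pos.1 (Nat.zero_lt_of_lt hdiv))
    rw [card_insert_of_notMem hxG] at hkG hdiv ⊢
    rcases hkG.eq_or_lt with hkG | hkG
    · have := card_le_choose_of_card_eq_two_mul hFG hint hp hk.le
        (by rw [card_insert_of_notMem hxG, hkG])
      rw [card_insert_of_notMem hxG] at this
      rw [franklCard, show #G + 1 - k - 1 = k - 1 by omega]
      omega
    have hpG : p ∈ G := by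
      obtain ⟨y, hy⟩ := card_pos.1 (by omega : 0 < #G)
      exact (mem_insert.1 hp).resolve_left
        ((hmin y (mem_insert_of_mem hy)).trans_lt (hx y hy)).ne
    have hFm := hF.memberSubfamily x
    have hFn := hF.nonMemberSubfamily x
    have hFGm := memberSubfamily_subset_powersetCard hFG x
    have hFGn := nonMemberSubfamily_subset_powersetCard hFG x
    rw [erase_insert hxG] at hFm hFn hFGm hFGn
    have hintm := hF.intersecting_memberSubfamily hFG hint
      (by rw [card_insert_of_notMem hxG]; omega) (mem_insert_self x G)
      fun y hy ↦ (mem_insert.1 hy).elim Eq.le fun h ↦ (hx y h).le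
    have hminG (y) (hy : y ∈ G) : p ≤ y := hmin y (mem_insert_of_mem hy)
    refine card_le_franklCard_succ hFG hint hp (mem_insert_self x G) (fun h ↦ hxG (h ▸ hpG))
      (card_insert_of_notMem hxG) hk (by omega)
      (by rwa [show #G + 1 - 3 = #G - 2 by omega, show #G + 1 - k - 1 = #G - k by omega] at hdiv)
      (fun h ↦ ih hFn hFGn (hint.mono (coe_subset.2 (filter_subset _ F))) (by omega) hpG hminG h)
      fun h ↦ ?_
    have hk' := hFm.one_lt_of_nonMemberSubfamily_nonempty hFGm hintm hpG hminG
      (card_pos.1 (Nat.zero_lt_of_lt h))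
    exact ⟨by omega, ih hFm hFGm hintm (by omega) hpG hminG
      (by rwa [show #G - (k - 1) - 1 = #G - k by omega])⟩

end IsShifted

end Shifted

section Diversity

variable {α : Type*}

lemma le_card_nonMemberSubfamily_compression [DecidableEq α] {F : Finset (Finset α)} {G : Finset α}
    {i j : α} {m : ℕ}
    (hm : ∀ l ∈ G, m ≤ #(F.nonMemberSubfamily l))
    (hij : m ≤ #((F.nonMemberSubfamily j).nonMemberSubfamily i)) :
    ∀ l ∈ G, m ≤ #((𝓒 {i} {j} F).nonMemberSubfamily l) := by
  intro l hl
  by_cases hli : l = i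
  · subst hli
    exact hij.trans (card_le_card (nonMemberSubfamily_pair_subset_compression F l j))
  · exact (hm l hl).trans (card_nonMemberSubfamily_le_compression F hli j)

theorem card_le_franklCard_three [LinearOrder α] {F : Finset (Finset α)} {G : Finset α} {k : ℕ}
    (hF : F ⊆ powersetCard k G) (hint : (F : Set (Finset α)).Intersecting) (hk : 3 ≤ k)
    (hkG : 2 * k ≤ #G)
    (hdiv : ∀ i ∈ G, (#G - 4).choose (#G - k - 1) ≤ #(F.nonMemberSubfamily i)) :
    (#F : ℤ) ≤ franklCard #G k 3 := by
  induction hw : ∑ S ∈ F, ∑ x ∈ S, #{y ∈ G | y < x} using Nat.strong_induction_on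
    generalizing F with
  | _ w ih =>
  subst hw
  by_cases hsmall : ∃ i ∈ G, #(F.nonMemberSubfamily i) ≤ (#G - 3).choose (#G - k - 1)
  · obtain ⟨i, hi, hiF⟩ := hsmall
    exact card_le_franklCard_of_card_nonMemberSubfamily_le hF hint hi (by norm_num) hk hkG
      (hdiv i hi) hiF
  push Not at hsmall
  by_cases hshift : IsShifted G F
  · have hne : G.Nonempty := card_pos.1 (by omega)
    rw [franklCard_three hk (by omega)]
    exact hshift.card_le_franklCard hF hint hkG (G.min'_mem hne) G.min'_le
      (hsmall _ (G.min'_mem hne))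
  simp only [IsShifted, not_forall] at hshift
  obtain ⟨i, hi, j, hj, hij, hcomp⟩ := hshift
  rcases le_or_gt ((#G - 4).choose (#G - k - 1)) #((F.nonMemberSubfamily j).nonMemberSubfamily i)
    with hpair | hpair
  · have hlt : #{y ∈ G | y < i} < #{y ∈ G | y < j} := card_lt_card <|
      (monotone_filter_right G fun _ _ h ↦ h.trans hij).ssubset_of_mem_notMem
        (mem_filter.2 ⟨hi, hij⟩) fun h ↦ lt_irrefl i (mem_filter.1 h).2
    rw [← UV.card_compression {i} {j} F]
    exact ih _ (sum_sum_compression_lt hlt hcomp) (compression_subset_powersetCard hF hi j)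
      (intersecting_compression hint i j) (le_card_nonMemberSubfamily_compression hdiv hpair) rfl
  · rw [franklCard_three hk (by omega)]
    exact card_le_franklCard_of_card_nonMemberSubfamily_pair_lt hF hint hi hj hij.ne hk hkG
      (hsmall i hi) (hsmall j hj) hpair

theorem diversity_bound_general [DecidableEq α] {F : Finset (Finset α)} {G : Finset α} {k u : ℕ}
    (hF : F ⊆ powersetCard k G) (hint : (F : Set (Finset α)).Intersecting) (hu : 3 ≤ u)
    (huk : u ≤ k) (hkG : 2 * k ≤ #G)
    (hdiv : ∀ i ∈ G, (#G - u - 1).choose (#G - k - 1) ≤ #(F.nonMemberSubfamily i)) :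
    (#F : ℤ) ≤ franklCard #G k u := by
  by_cases hsmall : ∃ i ∈ G, #(F.nonMemberSubfamily i) ≤ (#G - 3).choose (#G - k - 1)
  · obtain ⟨i, hi, hiF⟩ := hsmall
    exact card_le_franklCard_of_card_nonMemberSubfamily_le hF hint hi (by omega) huk hkG
      (hdiv i hi) hiF
  push Not at hsmall
  obtain ⟨order, -⟩ := exists_wellFoundedLT α
  obtain rfl : ‹DecidableEq α› = order.toDecidableEq := Subsingleton.elim _ _
  refine (card_le_franklCard_three hF hint (hu.trans huk) hkG fun i hi ↦ ?_).trans
    (franklCard_le_franklCard (by norm_num) hu (by omega) hkG)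
  exact (Nat.choose_le_choose _ (by omega)).trans (hsmall i hi).le

lemma diversity_le_card_nonMemberSubfamily {n i : ℕ} (F : Finset (Finset ℕ)) (hi : i ∈ Icc 1 n) :
    diversity n F ≤ #(F.nonMemberSubfamily i) := by
  have hdeg : deg F i ≤ maxDeg n F := le_sup hi
  have hsplit : deg F i + #(F.nonMemberSubfamily i) = #F :=
    card_filter_add_card_filter_not (i ∈ ·)
  rw [diversity]
  omega

end Diversity

/-- Kupavskii–Zakharov: if `F ⊆ C([n],k)` is intersecting, `n > 2k > 0`, and
`γ(F) ≥ C(n-u-1, n-k-1)` for some (integer) `3 ≤ u ≤ k`, then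
`|F| ≤ C(n-1,k-1) + C(n-u-1,n-k-1) - C(n-u-1,k-1)`. -/
theorem diversity_bound (n k u : ℕ) (hk : 0 < k) (hnk : 2 * k < n)
    (hu3 : 3 ≤ u) (huk : u ≤ k)
    (F : Finset (Finset ℕ)) (hF : F ⊆ (Finset.Icc 1 n).powersetCard k)
    (hint : ∀ A ∈ F, ∀ B ∈ F, (A ∩ B).Nonempty)
    (hdiv : (n - u - 1).choose (n - k - 1) ≤ diversity n F) :
    (F.card : ℤ) ≤ ((n - 1).choose (k - 1) : ℤ)
      + ((n - u - 1).choose (n - k - 1) : ℤ) - ((n - u - 1).choose (k - 1) : ℤ) := by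
  have hn : #(Icc 1 n) = n := by rw [Nat.card_Icc, Nat.add_sub_cancel]
  simpa only [franklCard, hn] using diversity_bound_general hF
    (fun A hA B hB ↦ not_disjoint_iff_nonempty_inter.2 (hint A hA B hB)) hu3 huk (by omega)
    fun i hi ↦ by rw [hn]; exact hdiv.trans (diversity_le_card_nonMemberSubfamily F hi)
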